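/- arXiv:2005.02695 — 2 statements merged into one kernel-verified Lean document; each statement's English description precedes it below -/
import Mathlib

section
/- Let F ∈ 𝓕. Then the injection F → ℋ(𝕋) is continuous; P⁺(F) = F ∩ Hol(𝔻) belongs to the class 𝓔; P⁻(F) = F ∩ H₀(ℂ∖𝔻̄) belongs to the class 𝓔⁻; consequently 𝒪(𝕋) = 𝓗(𝔻̄) ⊕ 𝓗₀(ℂ∖𝔻) ⊂ F. Moreover, if G is a closed subspace of F such that 𝐒^{-1}(G) ⊂ G, then G ∩ Hol(𝔻) has the division property. -/
noncomputable section

open Metric Set Filter Topology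
open scoped Classical

/-- Functions holomorphic on the open unit disc, normalized to vanish outside it.
This is our model of `Hol(𝔻)`. -/
def HolDisc : Set (ℂ → ℂ) :=
  {f | DifferentiableOn ℂ f (Metric.ball (0:ℂ) 1) ∧ ∀ z ∉ Metric.ball (0:ℂ) 1, f z = 0}

/-- The constant function `1` of `Hol(𝔻)` (normalized to vanish outside the disc). -/
def oneD : ℂ → ℂ := fun z => if z ∈ Metric.ball (0:ℂ) 1 then 1 else 0

/-- The shift `S`, `(Sf)(z) = z f(z)`, as a linear map. -/
def shiftL : (ℂ → ℂ) →ₗ[ℂ] (ℂ → ℂ) where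
  toFun f := fun z => z * f z
  map_add' f g := by funext z; simp [mul_add]
  map_smul' c f := by funext z; simp [smul_eq_mul]; ring

/-- Division: `f_λ(z) = (f(z) - f(λ))/(z - λ)` for `z ≠ λ`, `f_λ(λ) = f'(λ)`,
normalized to vanish outside the disc.  `fdivB 0` is the backward shift `T`. -/
def fdivB (lam : ℂ) (f : ℂ → ℂ) : ℂ → ℂ := fun z =>
  if z ∈ Metric.ball (0:ℂ) 1 then
    (if z = lam then deriv f lam else (f z - f lam) / (z - lam))
  else 0

/-- The reflected model of the shift `S⁻` on `H₀(ℂ ∖ 𝔻̄)`: a function `h` on `{|ζ|>1}`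
vanishing at `∞` is represented by `k(w) = h(1/w)` (holomorphic on `𝔻`, `k 0 = 0`);
`S⁻` corresponds to `k ↦ (k(z) - k(0))/z - k'(0)·1`. -/
def negShiftF (k : ℂ → ℂ) : ℂ → ℂ := fun z => fdivB 0 k z - deriv k 0 * oneD z

/-- `n`-th Taylor coefficient at the origin. -/
def tCoeff (n : ℕ) (f : ℂ → ℂ) : ℂ := iteratedDeriv n f 0 / (Nat.factorial n)

section aux12

lemma aux_bound {A : Type*} [NormedRing A] [NormedAlgebra ℂ A] [CompleteSpace A] (a : A)
    (h : spectrum ℂ a ⊆ Metric.sphere (0:ℂ) 1) (s : ℝ) (hs : 1 < s) :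
    ∀ᶠ n : ℕ in atTop, ‖a ^ n‖ ≤ s ^ n := by
  have hr : spectralRadius ℂ a ≤ 1 := by
    refine iSup₂_le fun k hk => ?_
    have h1 : ‖k‖ = 1 := by simpa using h hk
    have : ‖k‖₊ = 1 := NNReal.eq h1
    simp [this]
  have ht := spectrum.pow_norm_pow_one_div_tendsto_nhds_spectralRadius a
  have hlt : spectralRadius ℂ a < ENNReal.ofReal s :=
    lt_of_le_of_lt hr (by simpa using ENNReal.one_lt_ofReal.2 hs)
  filter_upwards [ht.eventually_lt_const hlt, eventually_gt_atTop 0] with n hn hn0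
  have h2 : ‖a ^ n‖ ^ (1 / (n:ℝ)) < s := (ENNReal.ofReal_lt_ofReal_iff (by linarith)).1 hn
  have h3 := pow_le_pow_left₀ (Real.rpow_nonneg (norm_nonneg _) _) h2.le n
  rw [one_div, Real.rpow_inv_natCast_pow (norm_nonneg _) hn0.ne'] at h3
  exact h3

lemma aux_rad {A : Type*} [NormedRing A] [NormedAlgebra ℂ A] [CompleteSpace A] (a : A) (C : ℝ)
    (h : ∀ s : ℝ, 1 < s → ∀ᶠ n : ℕ in atTop, ‖a ^ n‖ ≤ C * s ^ n) :
    spectralRadius ℂ a ≤ 1 := by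
  refine iSup₂_le fun k hk => ?_
  suffices hh : ‖k‖ ≤ 1 by
    have : ‖k‖₊ ≤ 1 := hh
    exact_mod_cast this
  by_contra! hk1
  obtain ⟨s, hs1, hs2⟩ := exists_between hk1
  have hs0 : 0 < s := by linarith
  have h1 : 1 < ‖k‖ / s := by rwa [one_lt_div hs0]
  have ht := tendsto_pow_atTop_atTop_of_one_lt h1
  obtain ⟨n, hn1, hn2⟩ := ((h s hs1).and (ht.eventually_gt_atTop (C * ‖(1:A)‖))).exists
  have h2 := spectrum.norm_le_norm_mul_of_mem (spectrum.pow_mem_pow a n hk)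
  rw [norm_pow] at h2
  rw [div_pow, lt_div_iff₀ (by positivity)] at hn2
  have := mul_le_mul_of_nonneg_right hn1 (norm_nonneg (1:A))
  nlinarith

lemma aux_summable {X : Type*} [NormedAddCommGroup X] [NormedSpace ℂ X] [CompleteSpace X]
    (A : X →L[ℂ] X) (hA : spectrum ℂ A ⊆ Metric.sphere (0:ℂ) 1) (g : ℂ → ℂ) (r : ℝ) (hr : 1 < r)
    (hg : DifferentiableOn ℂ g (Metric.ball (0:ℂ) r)) (x : X) :
    Summable (fun n : ℕ => tCoeff n g • (A ^ n) x) := by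
  obtain ⟨t, ht1, ht2⟩ := exists_between hr
  obtain ⟨s, hs1, hs2⟩ := exists_between ht1
  have hmem : (t : ℂ) ∈ Metric.ball (0:ℂ) r := by
    simp [abs_of_pos (by linarith : 0 < t)]; exact ht2
  have h0 := (Complex.hasSum_taylorSeries_on_ball hg hmem).summable.tendsto_atTop_zero
  have h1 := h0.norm.eventually_lt_const (u := 1) (by simp)
  have hq : s / t < 1 := by rw [div_lt_one (by linarith)]; exact hs2
  refine Summable.of_norm_bounded_eventually_nat (g := fun n => (s/t)^n * ‖x‖)
    ((summable_geometric_of_lt_one (by positivity) hq).mul_right _) ?_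
  filter_upwards [h1, aux_bound A hA s hs1] with n h1 h2
  have h3 : ‖tCoeff n g‖ * t ^ n ≤ 1 := by
    refine le_trans (le_of_eq ?_) h1.le
    simp [tCoeff, abs_of_pos (by linarith : 0 < t)]
    ring
  have ht0 : (0:ℝ) < t := by linarith
  have hs0 : (0:ℝ) < s := by linarith
  have h4 : ‖tCoeff n g‖ ≤ 1 / t ^ n := by rwa [le_div_iff₀ (by positivity)]
  rw [norm_smul]
  calc ‖tCoeff n g‖ * ‖(A ^ n) x‖ ≤ (1 / t ^ n) * (s ^ n * ‖x‖) := by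
        gcongr
        exact ((A ^ n).le_opNorm x).trans (by gcongr)
    _ = _ := by rw [div_pow]; ring

lemma aux_tCoeff_mul (n : ℕ) (f g : ℂ → ℂ) (c : ℂ) (hg : AnalyticAt ℂ g 0)
    (h : f =ᶠ[𝓝 0] fun z => z * g z + c) : tCoeff (n+1) f = tCoeff n g := by
  unfold tCoeff
  rw [h.iteratedDeriv_eq]
  have e : iteratedDeriv (n+1) (fun z => z * g z + c) 0
      = iteratedDeriv (n+1) (fun z => z * g z) 0 := by
    rw [iteratedDeriv_succ', iteratedDeriv_succ']
    congr 1
    funext z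
    simp
  rw [e, iteratedDeriv_fun_mul (f := fun z => z) contDiffAt_id hg.contDiffAt]
  have hz : ∀ i, iteratedDeriv i (fun z : ℂ => z) 0 = if i = 1 then 1 else 0 := by
    intro i
    rcases i with _ | _ | i
    · simp
    · simp
    · rw [iteratedDeriv_succ', iteratedDeriv_succ']
      simp [deriv_const']
  simp only [hz]
  rw [Finset.sum_eq_single 1]
  · have : (Nat.factorial n : ℂ) ≠ 0 := by exact_mod_cast Nat.factorial_ne_zero n
    have h3 : ((n:ℂ)+1) ≠ 0 := by exact_mod_cast Nat.succ_ne_zero n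
    simp [Nat.factorial_succ]
    field_simp
  · intro b _ hb; simp [hb]
  · intro h; simp at h

lemma aux_tCoeff_add (n : ℕ) (f g : ℂ → ℂ) (c : ℂ)
    (h : f =ᶠ[𝓝 0] fun z => g z + c) : tCoeff (n+1) f = tCoeff (n+1) g := by
  unfold tCoeff
  rw [h.iteratedDeriv_eq, iteratedDeriv_succ', iteratedDeriv_succ']
  congr 2
  funext z
  simp

lemma aux_inv {A : Type*} [NormedRing A] [NormedAlgebra ℂ A] (a : A)
    (h : spectrum ℂ a ⊆ Metric.sphere (0:ℂ) 1) :
    ∃ b : A, a * b = 1 ∧ b * a = 1 ∧ spectrum ℂ b ⊆ Metric.sphere (0:ℂ) 1 := by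
  have h0 : (0:ℂ) ∉ spectrum ℂ a := fun h' => by simpa using h h'
  obtain ⟨u, rfl⟩ := spectrum.isUnit_of_zero_notMem ℂ h0
  refine ⟨↑u⁻¹, by simp, by simp, fun k hk => ?_⟩
  have hk0 : k ≠ 0 := by
    rintro rfl
    rw [spectrum.zero_mem_iff] at hk
    exact hk (Units.isUnit _)
  have h2 := (spectrum.inv_mem_iff (r := Units.mk0 k hk0) (a := u⁻¹)).1 hk
  rw [inv_inv] at h2
  have h3 := h h2
  simpa using h3

lemma aux_res {X : Type*} [NormedAddCommGroup X] [NormedSpace ℂ X]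
    (A : X →L[ℂ] X) (hA : spectrum ℂ A ⊆ Metric.sphere (0:ℂ) 1) (l : ℂ) (hl : ‖l‖ ≠ 1) :
    ∃ B : X →L[ℂ] X, ∀ f, A (B f) - l • B f = f := by
  have h0 : l ∉ spectrum ℂ A := fun h' => hl (by simpa using hA h')
  rw [spectrum.notMem_iff] at h0
  obtain ⟨u, hu⟩ := h0
  refine ⟨-↑u⁻¹, fun f => ?_⟩
  have h1 : (u : X →L[ℂ] X) * ↑u⁻¹ = 1 := by simp
  rw [hu] at h1
  have h2 := congrArg (fun T : X →L[ℂ] X => T f) h1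
  simp [Algebra.algebraMap_eq_smul_one] at h2 ⊢
  rw [neg_add_eq_sub]; exact h2

lemma aux_res2 {X : Type*} [NormedAddCommGroup X] [NormedSpace ℂ X]
    (A : X →L[ℂ] X) (hA : spectrum ℂ A ⊆ Metric.sphere (0:ℂ) 1) (w : ℂ) (hw : ‖w‖ < 1) :
    ∃ B : X →L[ℂ] X, ∀ f, B f - w • A (B f) = f := by
  by_cases hw0 : w = 0
  · exact ⟨1, fun f => by simp [hw0]⟩
  obtain ⟨B, hB⟩ := aux_res A hA w⁻¹ (by
    rw [norm_inv]; intro h; rw [inv_eq_one] at h; linarith)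
  refine ⟨-w⁻¹ • B, fun f => ?_⟩
  have := hB f
  simp only [FunLike.coe_smul, Pi.smul_apply, map_smul, smul_smul]
  rw [mul_neg, mul_inv_cancel₀ hw0]
  nth_rewrite 3 [← hB f]
  module

/-- Restriction of a compressed operator has spectral radius at most one. -/
lemma aux_compress {X : Type*} [NormedAddCommGroup X] [NormedSpace ℂ X] [CompleteSpace X]
    (A Q : X →L[ℂ] X) (hA : spectrum ℂ A ⊆ Metric.sphere (0:ℂ) 1)
    (K : Submodule ℂ X) (hK : IsClosed (K : Set X))
    (hQ : ∀ f, Q f ∈ K) (hQ1 : ∀ f ∈ K, Q f = f) (hQA : (∀ f, Q (A (Q f)) = Q (A f)) ∨ ∀ f ∈ K, A f ∈ K) :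
    ∃ T : K →L[ℂ] K, (∀ f : K, (T f : X) = Q (A f)) ∧ spectralRadius ℂ T ≤ 1 := by
  have : CompleteSpace K := hK.completeSpace_coe
  let T : K →L[ℂ] K := ((Q.comp A).comp K.subtypeL).codRestrict K (fun f => hQ _)
  have hT : ∀ f : K, (T f : X) = Q (A f) := fun f => rfl
  have hTn : ∀ n : ℕ, ∀ f : K, ((T ^ n) f : X) = Q ((A ^ n) f) := by
    intro n
    induction n with
    | zero => intro f; simp [hQ1 f f.2]
    | succ n ih =>
      intro f
      rw [pow_succ', pow_succ']
      change ((T ((T ^ n) f) : K) : X) = Q (A ((A ^ n) f))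
      rw [hT, ih]
      rcases hQA with hQA | hQA
      · rw [hQA]
      · have hmem : ∀ m : ℕ, (A ^ m) (f : X) ∈ K := by
          intro m
          induction m with
          | zero => simp
          | succ m ihm => rw [pow_succ']; exact hQA _ ihm
        rw [hQ1 _ (hmem n)]
  refine ⟨T, hT, aux_rad T ‖Q‖ fun s hs => ?_⟩
  filter_upwards [aux_bound A hA s hs] with n hn
  have hs0 : 0 < s := by linarith
  refine ContinuousLinearMap.opNorm_le_bound _ (by positivity) fun f => ?_
  change ‖((T ^ n) f : X)‖ ≤ _
  rw [hTn]
  calc ‖Q ((A ^ n) f)‖ ≤ ‖Q‖ * (‖A ^ n‖ * ‖(f:X)‖) :=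
        (Q.le_opNorm _).trans (by gcongr; exact (A ^ n).le_opNorm _)
    _ ≤ ‖Q‖ * (s ^ n * ‖f‖) := by gcongr; rfl
    _ = _ := by ring

lemma aux_deriv (f g : ℂ → ℂ) (l c : ℂ) (hg : DifferentiableAt ℂ g l)
    (h : f =ᶠ[𝓝 l] fun z => (z - l) * g z + c) : deriv f l = g l := by
  rw [h.deriv_eq]
  have h1 := ((((hasDerivAt_id l).sub_const l).mul hg.hasDerivAt).add_const c).deriv
  simpa using h1

lemma aux_geom {X : Type*} [NormedAddCommGroup X] [NormedSpace ℂ X] [CompleteSpace X]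
    (R : X →L[ℂ] X) (hR : spectrum ℂ R ⊆ Metric.sphere (0:ℂ) 1) (l : ℂ) (hl : ‖l‖ < 1) (f : X) :
    Summable (fun n : ℕ => l ^ n • (R ^ n) f) := by
  have h0 := norm_nonneg l
  have hs : 1 < 2 / (1 + ‖l‖) := by rw [one_lt_div (by linarith)]; linarith
  have hq : ‖l‖ * (2 / (1 + ‖l‖)) < 1 := by
    rw [← mul_div_assoc, div_lt_one (by linarith)]; linarith
  refine Summable.of_norm_bounded_eventually_nat
    (g := fun n => (‖l‖ * (2 / (1 + ‖l‖))) ^ n * ‖f‖)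
    ((summable_geometric_of_lt_one (by positivity) hq).mul_right _) ?_
  filter_upwards [aux_bound R hR _ hs] with n hn
  rw [norm_smul, norm_pow, mul_pow, mul_assoc]
  gcongr
  exact ((R ^ n).le_opNorm f).trans (by gcongr)

end aux12

/-- (Proposition 5.3 (i)) Let `F ∈ 𝓕` be a Banach space of
hyperfunctions on `𝕋`.  A hyperfunction is encoded by the pair `(ιp f, ιm f)` where
`ιp f ∈ Hol(𝔻)` is the analytic part and `ιm f`, with `ιm f 0 = 0`, is the reflection
`k(w) = f⁻(1/w)` of the co-analytic part.  Then: the coefficient functionals are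
continuous (the injection `F → ℋ(𝕋)` is continuous); `P⁺(F) = F ∩ Hol(𝔻) ∈ 𝓔`;
`P⁻(F) = F ∩ H₀(ℂ∖𝔻̄) ∈ 𝓔⁻`; `𝒪(𝕋) ⊆ F`; and `G ∩ Hol(𝔻)` has the division property
for every closed subspace `G` of `F` with `𝐒⁻¹(G) ⊆ G`. -/
theorem statement12
    {X : Type*} [NormedAddCommGroup X] [NormedSpace ℂ X] [CompleteSpace X] [Nontrivial X]
    (ιp ιm : X →ₗ[ℂ] (ℂ → ℂ))
    (hp : ∀ f : X, ιp f ∈ HolDisc)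
    (hm : ∀ f : X, ιm f ∈ HolDisc ∧ ιm f 0 = 0)
    (hinj : ∀ f g : X, ιp f = ιp g → ιm f = ιm g → f = g)
    (PB : X →L[ℂ] X) (hPB : ∀ f : X, ιp (PB f) = ιp f ∧ ιm (PB f) = 0)
    (SB : X →L[ℂ] X)
    (hSB : ∀ f : X, ιp (SB f) = (fun z => z * ιp f z + deriv (ιm f) 0 * oneD z)
                  ∧ ιm (SB f) = negShiftF (ιm f))
    (hspec : spectrum ℂ SB ⊆ Metric.sphere (0:ℂ) 1) :
    -- the Fourier-coefficient functionals Lₙ are continuous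
    (∀ n : ℤ, ∃ L : X →L[ℂ] ℂ, ∀ f : X,
        L f = if 0 ≤ n then tCoeff n.toNat (ιp f) else tCoeff (-n).toNat (ιm f))
    -- P⁺(F) = F ∩ Hol(𝔻)
    ∧ (∀ f : X, PB f ∈ LinearMap.ker ιm) ∧ (∀ f ∈ LinearMap.ker ιm, PB f = f)
    -- F⁺ := F ∩ Hol(𝔻) is closed and belongs to the class 𝓔
    ∧ IsClosed ((LinearMap.ker ιm : Submodule ℂ X) : Set X)
    ∧ (∃ Sp Tp : ↥(LinearMap.ker ιm) →L[ℂ] ↥(LinearMap.ker ιm),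
        (∀ f : ↥(LinearMap.ker ιm), ιp ↑(Sp f) = shiftL (ιp ↑f))
        ∧ (∀ f : ↥(LinearMap.ker ιm), ιp ↑(Tp f) = fdivB 0 (ιp ↑f))
        ∧ spectralRadius ℂ Sp ≤ 1 ∧ spectralRadius ℂ Tp ≤ 1)
    -- F⁻ := F ∩ H₀(ℂ∖𝔻̄) is closed and belongs to the class 𝓔⁻
    ∧ IsClosed ((LinearMap.ker ιp : Submodule ℂ X) : Set X)
    ∧ (∃ Sm Tm : ↥(LinearMap.ker ιp) →L[ℂ] ↥(LinearMap.ker ιp),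
        (∀ u : ↥(LinearMap.ker ιp), ιm ↑(Sm u) = negShiftF (ιm ↑u))
        ∧ (∀ u : ↥(LinearMap.ker ιp), ιm ↑(Tm u) = shiftL (ιm ↑u))
        ∧ spectralRadius ℂ Sm ≤ 1 ∧ spectralRadius ℂ Tm ≤ 1)
    -- 𝒪(𝕋) ⊆ F
    ∧ (∀ g k : ℂ → ℂ,
        (∃ r : ℝ, 1 < r ∧ DifferentiableOn ℂ g (Metric.ball (0:ℂ) r)) →
        (∃ r : ℝ, 1 < r ∧ DifferentiableOn ℂ k (Metric.ball (0:ℂ) r)) → k 0 = 0 →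
        ∃ f : X, Set.EqOn (ιp f) g (Metric.ball (0:ℂ) 1)
          ∧ Set.EqOn (ιm f) k (Metric.ball (0:ℂ) 1))
    -- if G is closed and 𝐒⁻¹(G) ⊆ G then G ∩ Hol(𝔻) has the division property
    ∧ (∀ G : Submodule ℂ X, IsClosed (G : Set X) → (∀ f : X, SB f ∈ G → f ∈ G) →
        ∀ f ∈ G, ιm f = 0 → ∀ lam ∈ Metric.ball (0:ℂ) 1, ιp f lam = 0 →
          ∃ g ∈ G, ιm g = 0 ∧ ιp g = fdivB lam (ιp f)) := by
  obtain ⟨R, hSR0, hRS0, hRspec⟩ := aux_inv SB hspec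
  have hSR : ∀ f, SB (R f) = f := fun f => congrArg (fun T : X →L[ℂ] X => T f) hSR0
  have hRS : ∀ f, R (SB f) = f := fun f => congrArg (fun T : X →L[ℂ] X => T f) hRS0
  have hball0 : (0:ℂ) ∈ Metric.ball (0:ℂ) 1 := by simp
  have hnhds : ∀ z ∈ Metric.ball (0:ℂ) 1, Metric.ball (0:ℂ) 1 ∈ 𝓝 z :=
    fun z hz => Metric.isOpen_ball.mem_nhds hz
  have hext : ∀ u v : ℂ → ℂ, (∀ z ∉ Metric.ball (0:ℂ) 1, u z = 0) →
      (∀ z ∉ Metric.ball (0:ℂ) 1, v z = 0) → (∀ z ∈ Metric.ball (0:ℂ) 1, u z = v z) → u = v := by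
    intro u v hu hv h
    funext z
    by_cases hz : z ∈ Metric.ball (0:ℂ) 1
    · exact h z hz
    · rw [hu z hz, hv z hz]
  have hfd0 : ∀ (l : ℂ) (u : ℂ → ℂ), ∀ z ∉ Metric.ball (0:ℂ) 1, fdivB l u z = 0 := by
    intro l u z hz; unfold fdivB; rw [if_neg hz]
  have hSp : ∀ f, ∀ z ∈ Metric.ball (0:ℂ) 1,
      ιp (SB f) z = z * ιp f z + deriv (ιm f) 0 := by
    intro f z hz
    rw [(hSB f).1]
    simp only [oneD]
    rw [if_pos hz, mul_one]
  have hSm : ∀ f, ∀ z ∈ Metric.ball (0:ℂ) 1,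
      ιm f z = z * (ιm (SB f) z + deriv (ιm f) 0) := by
    intro f z hz
    rw [(hSB f).2]
    simp only [negShiftF, fdivB, oneD]
    rw [if_pos hz, if_pos hz]
    by_cases h0 : z = 0
    · simp [h0, (hm f).2]
    · rw [if_neg h0, (hm f).2]
      field_simp
      ring
  have hnz : negShiftF 0 = 0 := by
    funext z
    have : deriv (0 : ℂ → ℂ) 0 = 0 := by simp
    simp [negShiftF, fdivB, this]
  have hfz : fdivB 0 0 = 0 := by
    funext z
    have : deriv (0 : ℂ → ℂ) 0 = 0 := by simp
    simp [fdivB, this]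
  have hSK : ∀ f, ιm f = 0 → ιm (SB f) = 0 := by
    intro f hf; rw [(hSB f).2, hf, hnz]
  have hdR : ∀ f, deriv (ιm (R f)) 0 = ιp f 0 := by
    intro f
    have := hSp (R f) 0 hball0
    rw [hSR] at this
    simpa using this.symm
  have hRp : ∀ f, ιp (R f) = fdivB 0 (ιp f) := by
    intro f
    refine hext _ _ (hp _).2 (hfd0 _ _) fun z hz => ?_
    have h1 := hSp (R f)
    simp only [hSR, hdR] at h1
    unfold fdivB
    rw [if_pos hz]
    by_cases h0 : z = 0
    · rw [if_pos h0, h0]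
      refine (aux_deriv _ _ 0 (ιp f 0) ((hp _).1.differentiableAt (hnhds 0 hball0)) ?_).symm
      filter_upwards [hnhds 0 hball0] with w hw
      rw [sub_zero]; exact h1 w hw
    · rw [if_neg h0, h1 z hz]
      field_simp
      ring
  have hRm : ∀ f, ∀ z ∈ Metric.ball (0:ℂ) 1, ιm (R f) z = z * (ιm f z + ιp f 0) := by
    intro f z hz
    have := hSm (R f) z hz
    rwa [hSR, hdR] at this
  -- evaluations through the coefficient functional
  have evp : ∀ l ∈ Metric.ball (0:ℂ) 1, ∃ B : X →L[ℂ] X, ∀ f, ιp f l = deriv (ιm (B f)) 0 := by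
    intro l hl
    have hl' : ‖l‖ < 1 := by simpa using hl
    obtain ⟨B, hB⟩ := aux_res SB hspec l hl'.ne
    refine ⟨B, fun f => ?_⟩
    have h1 := congrArg (fun x => ιp x l) (hB f)
    simp only [map_sub, map_smul, Pi.sub_apply, Pi.smul_apply, smul_eq_mul] at h1
    rw [hSp _ l hl] at h1
    rw [← h1]; ring
  have evm : ∀ l ∈ Metric.ball (0:ℂ) 1,
      ∃ B : X →L[ℂ] X, ∀ f, ιm f l = l * deriv (ιm (B f)) 0 := by
    intro l hl
    have hl' : ‖l‖ < 1 := by simpa using hl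
    obtain ⟨B, hB⟩ := aux_res2 SB hspec l hl'
    refine ⟨B, fun f => ?_⟩
    have h1 := congrArg (fun x => ιm x l) (hB f)
    simp only [map_sub, map_smul, Pi.sub_apply, Pi.smul_apply, smul_eq_mul] at h1
    rw [hSm _ l hl] at h1
    rw [← h1]; ring
  have hex : ∃ f, deriv (ιm f) 0 ≠ 0 := by
    by_contra! hno
    obtain ⟨f, hf⟩ := exists_ne (0 : X)
    apply hf
    apply hinj
    · rw [map_zero]
      refine hext _ _ (hp _).2 (fun _ _ => rfl) fun z hz => ?_
      obtain ⟨B, hB⟩ := evp z hz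
      rw [hB, hno]; rfl
    · rw [map_zero]
      refine hext _ _ (hm _).1.2 (fun _ _ => rfl) fun z hz => ?_
      obtain ⟨B, hB⟩ := evm z hz
      rw [hB, hno, mul_zero]; rfl
  have hcomm : ∀ f, ιp (PB (SB f) - SB (PB f)) = (deriv (ιm f) 0) • oneD ∧
      ιm (PB (SB f) - SB (PB f)) = 0 := by
    intro f
    constructor
    · rw [map_sub, (hPB _).1, (hSB f).1, (hSB (PB f)).1, (hPB f).1, (hPB f).2]
      funext z
      have : deriv (0 : ℂ → ℂ) 0 = 0 := by simp
      simp [this]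
    · rw [map_sub, (hPB _).2, hSK _ (hPB f).2, sub_zero]
  obtain ⟨e, hep, hem⟩ : ∃ e : X, ιp e = oneD ∧ ιm e = 0 := by
    obtain ⟨f, hf⟩ := hex
    refine ⟨(deriv (ιm f) 0)⁻¹ • (PB (SB f) - SB (PB f)), ?_, ?_⟩
    · rw [map_smul, (hcomm f).1, smul_smul, inv_mul_cancel₀ hf, one_smul]
    · rw [map_smul, (hcomm f).2, smul_zero]
  have he0 : e ≠ 0 := by
    rintro rfl
    rw [map_zero] at hep
    have := congrFun hep 0
    simp [oneD] at this
  obtain ⟨φ, hφ⟩ := SeparatingDual.exists_eq_one (R := ℂ) he0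
  obtain ⟨D, hD⟩ : ∃ D : X →L[ℂ] ℂ, ∀ f, D f = deriv (ιm f) 0 := by
    refine ⟨φ.comp (PB.comp SB - SB.comp PB), fun f => ?_⟩
    have : PB (SB f) - SB (PB f) = (deriv (ιm f) 0) • e := by
      apply hinj
      · rw [(hcomm f).1, map_smul, hep]
      · rw [(hcomm f).2, map_smul, hem, smul_zero]
    change φ (PB (SB f) - SB (PB f)) = _
    rw [this, map_smul, hφ, smul_eq_mul, mul_one]
  have hkm : ∀ f, ιm f = 0 → PB f = f := fun f hf =>
    hinj _ _ (hPB f).1 (by rw [(hPB f).2, hf])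
  have hkp : ∀ f, ιp f = 0 → PB f = 0 := fun f hf =>
    hinj _ _ (by rw [(hPB f).1, hf, map_zero]) (by rw [(hPB f).2, map_zero])
  have hc1 : IsClosed ((LinearMap.ker ιm : Submodule ℂ X) : Set X) := by
    have : ((LinearMap.ker ιm : Submodule ℂ X) : Set X) = {f | PB f = f} := by
      ext f
      simp only [SetLike.mem_coe, LinearMap.mem_ker, Set.mem_setOf_eq]
      exact ⟨hkm f, fun h => by rw [← h]; exact (hPB f).2⟩
    rw [this]
    exact isClosed_eq PB.continuous continuous_id
  have hc2 : IsClosed ((LinearMap.ker ιp : Submodule ℂ X) : Set X) := by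
    have : ((LinearMap.ker ιp : Submodule ℂ X) : Set X) = {f | PB f = 0} := by
      ext f
      simp only [SetLike.mem_coe, LinearMap.mem_ker, Set.mem_setOf_eq]
      exact ⟨hkp f, fun h => by rw [← (hPB f).1, h, map_zero]⟩
    rw [this]
    exact isClosed_eq PB.continuous continuous_const
  have hanp : ∀ f, AnalyticAt ℂ (ιp f) 0 := fun f => (hp f).1.analyticAt (hnhds 0 hball0)
  have hanm : ∀ f, AnalyticAt ℂ (ιm f) 0 := fun f => (hm f).1.1.analyticAt (hnhds 0 hball0)
  refine ⟨?_, fun f => (hPB f).2, fun f hf => hkm f hf, hc1, ?_, hc2, ?_, ?_, ?_⟩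
  · -- coefficients
    have hpos : ∀ n : ℕ, ∃ L : X →L[ℂ] ℂ, ∀ f, L f = tCoeff n (ιp f) := by
      intro n
      induction n with
      | zero =>
        refine ⟨D.comp R, fun f => ?_⟩
        change D (R f) = _
        rw [hD, hdR]
        simp [tCoeff]
      | succ n ih =>
        obtain ⟨L, hL⟩ := ih
        refine ⟨L.comp R, fun f => ?_⟩
        change L (R f) = _
        rw [hL]
        refine (aux_tCoeff_mul n _ _ (ιp f 0) (hanp _) ?_).symm
        filter_upwards [hnhds 0 hball0] with w hw
        have := hSp (R f) w hw
        rwa [hSR, hdR] at this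
    have hneg : ∀ n : ℕ, ∃ L : X →L[ℂ] ℂ, ∀ f, L f = tCoeff (n+1) (ιm f) := by
      intro n
      induction n with
      | zero =>
        refine ⟨D, fun f => ?_⟩
        rw [hD]
        simp [tCoeff]
      | succ n ih =>
        obtain ⟨L, hL⟩ := ih
        refine ⟨L.comp SB, fun f => ?_⟩
        change L (SB f) = _
        rw [hL]
        rw [aux_tCoeff_mul (n+1) (ιm f) (fun z => ιm (SB f) z + deriv (ιm f) 0) 0
          ((hanm _).add analyticAt_const) ?_]
        · exact (aux_tCoeff_add n _ _ _ (Filter.EventuallyEq.rfl)).symm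
        · filter_upwards [hnhds 0 hball0] with w hw
          rw [add_zero]
          exact hSm f w hw
    intro n
    by_cases hn : 0 ≤ n
    · obtain ⟨L, hL⟩ := hpos n.toNat
      exact ⟨L, fun f => by rw [if_pos hn, hL]⟩
    · obtain ⟨L, hL⟩ := hneg ((-n).toNat - 1)
      refine ⟨L, fun f => ?_⟩
      rw [if_neg hn, hL]
      congr 1
      omega
  · obtain ⟨Sp, hSp1, hSp2⟩ := aux_compress SB PB hspec (LinearMap.ker ιm) hc1
      (fun f => (hPB f).2) (fun f hf => hkm f hf) (Or.inr fun f hf => hSK f hf)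
    obtain ⟨Tp, hTp1, hTp2⟩ := aux_compress R PB hRspec (LinearMap.ker ιm) hc1
      (fun f => (hPB f).2) (fun f hf => hkm f hf) (Or.inl fun f => by
        apply hinj
        · rw [(hPB _).1, (hPB _).1, hRp, hRp, (hPB _).1]
        · rw [(hPB _).2, (hPB _).2])
    refine ⟨Sp, Tp, fun f => ?_, fun f => ?_, hSp2, hTp2⟩
    · rw [hSp1, (hPB _).1, (hSB _).1]
      have hf : ιm (f : X) = 0 := f.2
      have : deriv (0 : ℂ → ℂ) 0 = 0 := by simp
      rw [hf, this]
      funext z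
      simp [shiftL]
    · rw [hTp1, (hPB _).1, hRp]
  · have hQ : ∀ f : X, (1 - PB) f = f - PB f := fun f => rfl
    have hQp : ∀ f : X, ιp ((1 - PB) f) = 0 := fun f => by
      rw [hQ, map_sub, (hPB f).1, sub_self]
    have hQm : ∀ f : X, ιm ((1 - PB) f) = ιm f := fun f => by
      rw [hQ, map_sub, (hPB f).2, sub_zero]
    have hQ1 : ∀ f ∈ LinearMap.ker ιp, (1 - PB) f = f := fun f hf => by
      rw [hQ, hkp f hf, sub_zero]
    obtain ⟨Sm, hSm1, hSm2⟩ := aux_compress SB (1 - PB) hspec (LinearMap.ker ιp) hc2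
      (fun f => hQp f) hQ1 (Or.inl fun f => by
        apply hinj
        · rw [hQp, hQp]
        · rw [hQm, hQm, (hSB _).2, (hSB _).2, hQm])
    obtain ⟨Tm, hTm1, hTm2⟩ := aux_compress R (1 - PB) hRspec (LinearMap.ker ιp) hc2
      (fun f => hQp f) hQ1 (Or.inr fun f hf => by
        have hf' : ιp f = 0 := hf
        change ιp (R f) = 0
        rw [hRp, hf', hfz])
    refine ⟨Sm, Tm, fun f => ?_, fun f => ?_, hSm2, hTm2⟩
    · rw [hSm1, hQm, (hSB _).2]
    · rw [hTm1, hQm]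
      have hf' : ιp (f : X) = 0 := f.2
      refine hext _ _ (hm _).1.2 (fun z hz => ?_) fun z hz => ?_
      · simp only [shiftL, LinearMap.coe_mk, AddHom.coe_mk]
        rw [(hm _).1.2 z hz, mul_zero]
      · rw [hRm _ z hz, hf']
        simp [shiftL]
  · rintro g k ⟨r, hr, hg⟩ ⟨r', hr', hk⟩ hk0
    have hs1 := (aux_summable SB hspec g r hr hg e).hasSum
    have hs2 := (aux_summable R hRspec k r' hr' hk e).hasSum
    set x := ∑' n : ℕ, tCoeff n g • (SB ^ n) e
    set y := ∑' n : ℕ, tCoeff n k • (R ^ n) e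
    have hSe : ∀ n : ℕ, (∀ z ∈ Metric.ball (0:ℂ) 1, ιp ((SB ^ n) e) z = z ^ n) ∧
        ιm ((SB ^ n) e) = 0 := by
      intro n
      induction n with
      | zero =>
        refine ⟨fun z hz => ?_, by simpa using hem⟩
        simp only [pow_zero, ContinuousLinearMap.one_apply, hep, oneD]
        rw [if_pos hz]
      | succ n ih =>
        have h1 : (SB ^ (n+1)) e = SB ((SB ^ n) e) := by rw [pow_succ']; rfl
        rw [h1]
        refine ⟨fun z hz => ?_, hSK _ ih.2⟩
        have : deriv (0 : ℂ → ℂ) 0 = 0 := by simp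
        rw [hSp _ z hz, ih.1 z hz, ih.2, this]
        ring
    have hRe : ∀ n : ℕ, ιp ((R ^ (n+1)) e) = 0 ∧
        (∀ z ∈ Metric.ball (0:ℂ) 1, ιm ((R ^ (n+1)) e) z = z ^ (n+1)) := by
      intro n
      induction n with
      | zero =>
        have h1 : (R ^ (0+1)) e = R e := by simp
        rw [h1]
        constructor
        · rw [hRp, hep]
          refine hext _ _ (hfd0 _ _) (fun _ _ => rfl) fun z hz => ?_
          simp only [fdivB]
          rw [if_pos hz]
          have h2 : deriv oneD 0 = 0 := by
            have : oneD =ᶠ[𝓝 0] fun _ => (1:ℂ) := by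
              filter_upwards [hnhds 0 hball0] with w hw
              simp only [oneD]; rw [if_pos hw]
            rw [this.deriv_eq]; simp
          rw [h2]
          simp only [oneD]
          rw [if_pos hz, if_pos hball0]
          simp
        · intro z hz
          rw [hRm _ z hz, hem, hep]
          simp [oneD]
      | succ n ih =>
        have h1 : (R ^ (n+1+1)) e = R ((R ^ (n+1)) e) := by rw [pow_succ']; rfl
        rw [h1]
        refine ⟨by rw [hRp, ih.1, hfz], fun z hz => ?_⟩
        rw [hRm _ z hz, ih.1, ih.2 z hz]
        simp only [Pi.zero_apply, add_zero]
        ring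
    have hb0 : tCoeff 0 k = 0 := by simp [tCoeff, hk0]
    have htay : ∀ (u : ℂ → ℂ) (ρ : ℝ), 1 < ρ → DifferentiableOn ℂ u (Metric.ball (0:ℂ) ρ) →
        ∀ z ∈ Metric.ball (0:ℂ) 1, HasSum (fun n : ℕ => tCoeff n u * z ^ n) (u z) := by
      intro u ρ hρ hu z hz
      have := Complex.hasSum_taylorSeries_on_ball hu (Metric.ball_subset_ball hρ.le hz)
      have hh : (fun n : ℕ => tCoeff n u * z ^ n) =
          fun n : ℕ => ((n.factorial : ℂ))⁻¹ • (z - 0) ^ n • iteratedDeriv n u 0 := by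
        funext n
        simp only [tCoeff, sub_zero, smul_eq_mul]
        ring
      rw [hh]
      exact this
    refine ⟨x + y, fun z hz => ?_, fun z hz => ?_⟩
    · obtain ⟨B, hB⟩ := evp z hz
      have hL : ∀ f, (D.comp B) f = ιp f z := fun f => by
        change D (B f) = _
        rw [hD, hB]
      have h1 := (D.comp B).hasSum hs1
      have h2 := (D.comp B).hasSum hs2
      simp only [map_smul, hL] at h1 h2
      have h3 : HasSum (fun n : ℕ => tCoeff n g • ιp ((SB ^ n) e) z) (g z) := by
        convert htay g r hr hg z hz using 2 with n
        rw [(hSe n).1 z hz, smul_eq_mul]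
      have h4 : HasSum (fun n : ℕ => tCoeff n k • ιp ((R ^ n) e) z) 0 := by
        convert hasSum_zero using 2 with n
        rcases n with _ | n
        · rw [hb0, zero_smul]
        · rw [(hRe n).1]; simp
      rw [map_add, Pi.add_apply, h1.unique h3, h2.unique h4, add_zero]
    · obtain ⟨B, hB⟩ := evm z hz
      have hL : ∀ f, (z • D.comp B) f = ιm f z := fun f => by
        change z * D (B f) = _
        rw [hD, hB]
      have h1 := (z • D.comp B).hasSum hs1
      have h2 := (z • D.comp B).hasSum hs2
      simp only [map_smul, hL] at h1 h2
      have h3 : HasSum (fun n : ℕ => tCoeff n g • ιm ((SB ^ n) e) z) 0 := by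
        convert hasSum_zero using 2 with n
        rw [(hSe n).2]; simp
      have h4 : HasSum (fun n : ℕ => tCoeff n k • ιm ((R ^ n) e) z) (k z) := by
        convert htay k r' hr' hk z hz using 2 with n
        rcases n with _ | n
        · rw [hb0, zero_smul, zero_mul]
        · rw [(hRe n).2 z hz, smul_eq_mul]
      rw [map_add, Pi.add_apply, h1.unique h3, h2.unique h4, zero_add]
  · intro G hG hGS f hf hfm l hl hfl
    have hl' : ‖l‖ < 1 := by simpa using hl
    have hGR : ∀ f ∈ G, R f ∈ G := fun f hf => hGS _ (by rwa [hSR])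
    have hRn : ∀ n : ℕ, (R ^ n) f ∈ G := by
      intro n
      induction n with
      | zero => simpa using hf
      | succ n ih => rw [pow_succ']; exact hGR _ ih
    have hsum := aux_geom R hRspec l hl' f
    set v := ∑' n : ℕ, l ^ n • (R ^ n) f with hv
    have hvG : v ∈ G := hG.mem_of_tendsto hsum.hasSum
      (Filter.Eventually.of_forall fun s => G.sum_mem fun n _ => G.smul_mem _ (hRn n))
    have hv1 : v = f + l • R v := by
      have h1 := (l • R).hasSum hsum.hasSum
      have h2 := hsum.tsum_eq_zero_add
      rw [← hv] at h1 h2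
      nth_rewrite 1 [h2]
      congr 1
      · simp
      · change _ = (l • R) v
        rw [← h1.tsum_eq]
        congr 1
        funext n
        have : (R ^ (n+1)) f = R ((R ^ n) f) := by rw [pow_succ']; rfl
        rw [this]
        simp only [FunLike.coe_smul, Pi.smul_apply, map_smul, smul_smul]
        rw [pow_succ]
    have hy : SB (R v) = f + l • R v := by rw [hSR]; exact hv1
    refine ⟨R v, hGR v hvG, ?_, ?_⟩
    all_goals
      generalize R v = y at hy
      have hp1 : ∀ z ∈ Metric.ball (0:ℂ) 1, ιp f z = (z - l) * ιp y z + deriv (ιm y) 0 := by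
        intro z hz
        have h1 := hSp y z hz
        rw [hy] at h1
        simp only [map_add, map_smul, Pi.add_apply, Pi.smul_apply, smul_eq_mul] at h1
        linear_combination h1
      have hd : deriv (ιm y) 0 = 0 := by
        have := hp1 l hl
        rw [hfl] at this
        simpa using this.symm
    · refine hext _ _ (hm _).1.2 (fun _ _ => rfl) fun z hz => ?_
      have h1 := hSm y z hz
      rw [hy, hd] at h1
      simp only [map_add, map_smul, Pi.add_apply, Pi.smul_apply, smul_eq_mul, hfm,
        Pi.zero_apply] at h1
      have hz' : ‖z‖ < 1 := by simpa using hz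
      have h2 : (1 - z * l) * ιm y z = 0 := by linear_combination h1
      rcases mul_eq_zero.1 h2 with h3 | h3
      · exfalso
        have h4 : ‖z * l‖ = 1 := by rw [← sub_eq_zero.1 h3, norm_one]
        rw [norm_mul] at h4
        nlinarith [norm_nonneg z, norm_nonneg l]
      · exact h3
    · refine hext _ _ (hp _).2 (hfd0 _ _) fun z hz => ?_
      unfold fdivB
      rw [if_pos hz]
      by_cases h0 : z = l
      · rw [if_pos h0, h0]
        refine (aux_deriv _ _ l (deriv (ιm y) 0) ((hp _).1.differentiableAt (hnhds l hl)) ?_).symm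
        filter_upwards [hnhds l hl] with w hw
        exact hp1 w hw
      · have h5 : z - l ≠ 0 := sub_ne_zero.2 h0
        rw [if_neg h0, hfl, hp1 z hz, hd]
        field_simp
        ring
end
end

section
/- Let E ∈ 𝓔, let M be a closed subspace of E having the division property, let π : E → E/M be the canonical surjection, let U := U₀ : E/M → E/M be the linear map satisfying U ∘ π ∘ S|_E = π, and let f ∈ M. Then for every λ ∈ 𝔻: the operator I_{E/M} − λU is bijective and f(λ)·U(I_{E/M} − λU)^{-1}π(1) = −π(f_λ). -/
noncomputable section

open Metric Set Filter Topology
open scoped Classical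

section helpers

variable {X : Type*} [NormedAddCommGroup X] [NormedSpace ℂ X] [CompleteSpace X]

theorem aux_fdiv (l : ℂ) (hl : l ∈ Metric.ball (0:ℂ) 1) (f : ℂ → ℂ) (hf : f ∈ HolDisc) :
    (∀ z, (z - l) * fdivB l f z = f z - f l * oneD z) := by
  intro z
  by_cases hz : z ∈ Metric.ball (0:ℂ) 1
  · by_cases h : z = l
    · subst h; simp only [oneD, if_pos hz]; ring
    · have : z - l ≠ 0 := sub_ne_zero.mpr h
      simp only [fdivB, oneD, if_pos hz, if_neg h]
      field_simp
  · simp only [fdivB, oneD, if_neg hz, hf.2 z hz]; simp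

theorem aux_fdiv_mul (l : ℂ) (hl : l ∈ Metric.ball (0:ℂ) 1) (f k : ℂ → ℂ)
    (hk : k ∈ HolDisc) (h : ∀ z, f z = (z - l) * k z) : fdivB l f = k := by
  funext z
  by_cases hz : z ∈ Metric.ball (0:ℂ) 1
  · by_cases hzl : z = l
    · subst hzl
      simp only [fdivB, if_pos hz, if_true]
      have hd : DifferentiableAt ℂ k z := hk.1.differentiableAt (Metric.isOpen_ball.mem_nhds hz)
      have h1 : HasDerivAt (fun w => (w - z) * k w) (1 * k z + (z - z) * deriv k z) z :=
        ((hasDerivAt_id z).sub_const z).mul hd.hasDerivAt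
      have h2 : f = fun w => (w - z) * k w := funext h
      rw [h2, h1.deriv]; ring
    · have : z - l ≠ 0 := sub_ne_zero.mpr hzl
      simp only [fdivB, if_pos hz, if_neg hzl, h]
      field_simp
      ring
  · simp only [fdivB, if_neg hz, hk.2 z hz]

theorem aux_ne (ι : X →ₗ[ℂ] (ℂ → ℂ)) (hinj : Function.Injective ι)
    (hhol : ∀ f : X, ι f ∈ HolDisc)
    (M : Submodule ℂ X) (hM0 : M ≠ ⊥)
    (hdiv : ∀ f ∈ M, ∀ lam ∈ Metric.ball (0:ℂ) 1,
      ι f lam = 0 → ∃ g ∈ M, ι g = fdivB lam (ι f))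
    (l : ℂ) (hl : l ∈ Metric.ball (0:ℂ) 1) : ∃ f ∈ M, ι f l ≠ 0 := by
  have han : ∀ f : X, AnalyticOnNhd ℂ (ι f) (Metric.ball 0 1) := fun f =>
    (hhol f).1.analyticOnNhd Metric.isOpen_ball
  have key : ∀ n : ℕ, ∀ f ∈ M, analyticOrderAt (ι f) l = n → ∃ f ∈ M, ι f l ≠ 0 := by
    intro n
    induction n with
    | zero =>
      intro f hf h
      exact ⟨f, hf, ((han f l hl).analyticOrderAt_eq_zero).1 (by simpa using h)⟩
    | succ n ih =>
      intro f hf h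
      by_cases h0 : ι f l = 0
      · obtain ⟨g, hg, hgf⟩ := hdiv f hf l hl h0
        refine ih g hg ?_
        have e1 : ι f = (fun z => z - l) * ι g := by
          funext z
          have := aux_fdiv l hl _ (hhol f) z
          rw [h0] at this
          simp [hgf, this]
        have a1 : AnalyticAt ℂ (fun z : ℂ => z - l) l := by fun_prop
        have o1 : analyticOrderAt (fun z : ℂ => z - l) l = (1 : ℕ) := by
          rw [a1.analyticOrderAt_eq_natCast]
          exact ⟨fun _ => 1, by fun_prop, one_ne_zero, by simp⟩
        rw [e1, analyticOrderAt_mul a1 (han g l hl), o1] at h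
        cases hm : analyticOrderAt (ι g) l with
        | top => rw [hm] at h; simp at h; exact absurd h.symm (by exact_mod_cast ENat.natCast_ne_top (n+1))
        | coe m =>
          rw [hm] at h
          have : 1 + m = n + 1 := by exact_mod_cast h
          have : m = n := by omega
          rw [this]
      · exact ⟨f, hf, h0⟩
  obtain ⟨f, hf, hne⟩ := M.exists_mem_ne_zero_of_ne_bot hM0
  cases hm : analyticOrderAt (ι f) l with
  | top =>
    exfalso
    apply hne
    apply hinj
    rw [analyticOrderAt_eq_top] at hm
    have := (han f).eqOn_zero_of_preconnected_of_eventuallyEq_zero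
      (convex_ball (0:ℂ) 1).isPreconnected hl hm
    funext z
    by_cases hz : z ∈ Metric.ball (0:ℂ) 1
    · simpa using this hz
    · simpa using (hhol f).2 z hz
  | coe m => exact key m f hf hm

theorem aux_div (ι : X →ₗ[ℂ] (ℂ → ℂ)) 
    (hhol : ∀ f : X, ι f ∈ HolDisc)
    (Tb : X →L[ℂ] X)
    (hTb : ∀ f : X, ι (Tb f) = fdivB 0 (ι f))
    (hTrad : spectralRadius ℂ Tb ≤ 1)
    (l : ℂ) (hl : l ∈ Metric.ball (0:ℂ) 1) (h : X) :
    ∃ k : X, ∀ z, (z - l) * ι k z = ι h z - ι h l * oneD z := by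
  have hu : IsUnit (1 - l • Tb) := by
    apply spectrum.isUnit_one_sub_smul_of_lt_inv_radius
    refine lt_of_lt_of_le ?_ (ENNReal.one_le_inv.mpr hTrad)
    have : ‖l‖₊ < 1 := by
      have := mem_ball_zero_iff.1 hl
      exact_mod_cast this
    exact_mod_cast this
  obtain ⟨W, hW⟩ := hu.exists_right_inv
  have hu' : W h - l • Tb (W h) = h := by
    have := congrArg (fun A : X →L[ℂ] X => A h) hW
    simpa using this
  set u := W h
  have hz : ∀ z, (z - l) * ι (Tb u) z = ι h z - ι u 0 * oneD z := by
    intro z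
    have h1 := aux_fdiv 0 (by simp) _ (hhol u) z
    rw [← hTb] at h1
    have h2 : ι h z = ι u z - l * ι (Tb u) z := by
      conv_lhs => rw [← hu']
      simp
    rw [h2]
    linear_combination h1
  have h0 : ι u 0 = ι h l := by
    have := hz l
    simp only [oneD, if_pos hl] at this
    linear_combination this
  exact ⟨Tb u, by rw [← h0]; exact hz⟩

end helpers

/-- (Lemma 7.2) Let `M` be a (nonzero) closed subspace of `E ∈ 𝓔`
having the division property, `π : E → E/M`, and `U = U₀` the linear map satisfying
`U ∘ π ∘ S = π`. Then for `f ∈ M` and `λ ∈ 𝔻`, `I - λU` is bijective and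
`f(λ)·U (I - λU)⁻¹ π(1) = -π(f_λ)`. -/
theorem statement15
    {X : Type*} [NormedAddCommGroup X] [NormedSpace ℂ X] [CompleteSpace X]
    (ι : X →ₗ[ℂ] (ℂ → ℂ)) (hinj : Function.Injective ι)
    (hhol : ∀ f : X, ι f ∈ HolDisc)
    (Sb Tb : X →L[ℂ] X)
    (hSb : ∀ f : X, ι (Sb f) = shiftL (ι f))
    (hTb : ∀ f : X, ι (Tb f) = fdivB 0 (ι f))
    (hSrad : spectralRadius ℂ Sb ≤ 1) (hTrad : spectralRadius ℂ Tb ≤ 1)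
    -- the constant function 1, as an element of E
    (e : X) (he : ι e = oneD)
    -- M : nonzero closed subspace with the division property
    (M : Submodule ℂ X) (hMc : IsClosed (M : Set X)) (hM0 : M ≠ ⊥)
    (hdiv : ∀ f ∈ M, ∀ lam ∈ Metric.ball (0:ℂ) 1,
      ι f lam = 0 → ∃ g ∈ M, ι g = fdivB lam (ι f))
    -- U = U₀ : E/M → E/M with U ∘ π ∘ S|E = π
    (U : (X ⧸ M) →ₗ[ℂ] (X ⧸ M)) (hU : ∀ f : X, U (M.mkQ (Sb f)) = M.mkQ f)
    (f : X) (hf : f ∈ M) (lam : ℂ) (hlam : lam ∈ Metric.ball (0:ℂ) 1) :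
    Function.Bijective
      ⇑((LinearMap.id : (X ⧸ M) →ₗ[ℂ] (X ⧸ M)) - lam • U)
    ∧ ∀ V : (X ⧸ M) →ₗ[ℂ] (X ⧸ M),
        (∀ q, V (((LinearMap.id : (X ⧸ M) →ₗ[ℂ] (X ⧸ M)) - lam • U) q) = q) →
        ∀ g : X, ι g = fdivB lam (ι f) →
          (ι f lam) • U (V (M.mkQ e)) = - M.mkQ g := by
  have hball0 : (0:ℂ) ∈ Metric.ball (0:ℂ) 1 := by simp
  have hsur : ∀ l ∈ Metric.ball (0:ℂ) 1, ∀ h : X, ∃ k : X,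
      M.mkQ (Sb k - l • k) = M.mkQ h := by
    intro l hl h
    obtain ⟨p, hp, hpl⟩ := aux_ne ι hinj hhol M hM0 hdiv l hl
    obtain ⟨k, hk⟩ := aux_div ι hhol Tb hTb hTrad l hl (h - (ι h l / ι p l) • p)
    refine ⟨k, ?_⟩
    have : Sb k - l • k = h - (ι h l / ι p l) • p := by
      apply hinj
      funext z
      have := hk z
      simp only [map_sub, map_smul, Pi.sub_apply, Pi.smul_apply, smul_eq_mul,
        div_mul_cancel₀ _ hpl, sub_self, zero_mul, sub_zero] at this
      simp only [map_sub, map_smul, Pi.sub_apply, Pi.smul_apply, smul_eq_mul, hSb]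
      rw [← this]
      simp [shiftL]; ring
    rw [this, map_sub, map_smul]
    have : M.mkQ p = 0 := by simpa using hp
    rw [this]; simp
  have hop : ∀ k : X, ((LinearMap.id : (X ⧸ M) →ₗ[ℂ] (X ⧸ M)) - lam • U) (M.mkQ (Sb k))
      = M.mkQ (Sb k - lam • k) := by
    intro k
    rw [LinearMap.sub_apply, LinearMap.smul_apply, hU, map_sub, map_smul, LinearMap.id_apply]
  refine ⟨⟨?_, ?_⟩, ?_⟩
  · rw [injective_iff_map_eq_zero]
    intro q hq
    obtain ⟨h, rfl⟩ := M.mkQ_surjective q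
    obtain ⟨k, hk⟩ := hsur 0 hball0 h
    rw [zero_smul, sub_zero] at hk
    rw [← hk, hop] at hq
    have hm : Sb k - lam • k ∈ M := (Submodule.Quotient.mk_eq_zero M).1 hq
    have hz : ∀ z, ι (Sb k - lam • k) z = (z - lam) * ι k z := by
      intro z
      simp only [map_sub, map_smul, Pi.sub_apply, Pi.smul_apply, smul_eq_mul, hSb]
      simp [shiftL]; ring
    obtain ⟨g, hg, hgk⟩ := hdiv _ hm lam hlam (by rw [hz]; simp)
    rw [aux_fdiv_mul lam hlam _ _ (hhol k) hz] at hgk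
    have hkM : k ∈ M := hinj hgk ▸ hg
    have : Sb k ∈ M := by
      have := M.add_mem hm (M.smul_mem lam hkM)
      simpa using this
    rw [← hk]
    simpa using this
  · intro q
    obtain ⟨h, rfl⟩ := M.mkQ_surjective q
    obtain ⟨k, hk⟩ := hsur lam hlam h
    exact ⟨M.mkQ (Sb k), by rw [hop, hk]⟩
  · intro V hV g hg
    have h1 : Sb g - lam • g = f - (ι f lam) • e := by
      apply hinj
      funext z
      have := aux_fdiv lam hlam _ (hhol f) z
      rw [← hg] at this
      simp only [map_sub, map_smul, Pi.sub_apply, Pi.smul_apply, smul_eq_mul, hSb, he]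
      rw [← this]
      simp [shiftL]; ring
    have hfz : M.mkQ f = 0 := by simpa using hf
    have h2 := hV (M.mkQ (Sb g))
    rw [hop, h1, map_sub, map_smul, hfz, zero_sub, map_neg, map_smul] at h2
    have h3 := congrArg U h2
    rw [hU, map_neg, map_smul] at h3
    rw [← h3, neg_neg]
end
end
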